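/- Let N ≥ 2 and let A = (A_0, …, A_N) and B = (B_0, …, B_N) be (N+1)-outcome POVMs on ℂ^d. Define the physical-noise incompatibility robustness α*_p as the supremum of all β_{00} ∈ [0,1] such that there exist positive semidefinite matrices C_{ij} ∈ M_d(ℂ) (i, j ∈ {0, …, N}) with Σ_{j=0}^{N} C_{ij} = β_{00} A_i + ((1−β_{00})/(N−1)) (1 − Tr[A_i]/d) I_d for all i and Σ_{i=0}^{N} C_{ij} = β_{00} B_j + ((1−β_{00})/(N−1)) (1 − Tr[B_j]/d) I_d for all j. Then α*_p equals the infimum, over Hermitian matrices X_0, …, X_N, Y_0, …, Y_N ∈ M_d(ℂ) satisfying X_i + Y_j ≥ 0 for all i, j and 1 + Σ_{i=0}^{N} Tr[X_i A_i] + Σ_{j=0}^{N} Tr[Y_j B_j] ≥ (1/(N−1)) ( Σ_{i=0}^{N} Tr[X_i] + Σ_{j=0}^{N} Tr[Y_j] − (1/d) Σ_{j=0}^{N} Tr[B_j] Tr[Y_j] − (1/d) Σ_{i=0}^{N} Tr[X_i] Tr[A_i] ), of the quantity 1 + Σ_{i=0}^{N} Tr[X_i A_i] + Σ_{j=0}^{N}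 Tr[Y_j B_j]. -/

import Mathlib

open Matrix
open scoped ComplexOrder

section helpers

lemma aux_repr {d : ℕ} (g : Matrix (Fin d) (Fin d) ℂ →ₗ[ℝ] ℝ) :
    ∃ X : Matrix (Fin d) (Fin d) ℂ, X.IsHermitian ∧
      ∀ M : Matrix (Fin d) (Fin d) ℂ, M.IsHermitian → g M = ((X * M).trace).re := by
  have h1 : ∃ X : Matrix (Fin d) (Fin d) ℂ, ∀ M, g M = ((X * M).trace).re := by
    refine ⟨Matrix.of fun l k => (⟨g (Matrix.single k l 1), - g (Matrix.single k l Complex.I)⟩ : ℂ), ?_⟩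
    intro M
    conv_lhs => rw [Matrix.matrix_eq_sum_single M]
    simp only [map_sum, Matrix.trace, Matrix.diag, Matrix.mul_apply, Complex.re_sum]
    rw [Finset.sum_comm]
    refine Finset.sum_congr rfl fun l _ => Finset.sum_congr rfl fun k _ => ?_
    have : Matrix.single k l (M k l) = (M k l).re • Matrix.single k l (1:ℂ)
        + (M k l).im • Matrix.single k l Complex.I := by
      rw [Matrix.smul_single, Matrix.smul_single, ← Matrix.single_add]
      congr 1
      simp [Complex.re_add_im]
    rw [this, map_add, map_smul, map_smul]
    simp only [Matrix.of_apply, Complex.mul_re, smul_eq_mul]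
    ring
  obtain ⟨X, hX⟩ := h1
  refine ⟨(1/2 : ℝ) • (X + Xᴴ), ?_, ?_⟩
  · rw [Matrix.IsHermitian, Matrix.conjTranspose_smul]
    simp [add_comm]
  · intro M hM
    have : ((Xᴴ * M).trace).re = ((X * M).trace).re := by
      have h2 : Xᴴ * M = (M * X)ᴴ := by rw [Matrix.conjTranspose_mul, hM.eq]
      rw [h2, Matrix.trace_conjTranspose, Matrix.trace_mul_comm]
      simp
    rw [hX M, Matrix.smul_mul, Matrix.trace_smul, Matrix.add_mul, Matrix.trace_add,
      Complex.smul_re, Complex.add_re, this, smul_eq_mul]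
    ring

open scoped Matrix.Norms.L2Operator MatrixOrder in
lemma aux_trace_nonneg {d : ℕ} {P Q : Matrix (Fin d) (Fin d) ℂ} (hP : P.PosSemidef)
    (hQ : Q.PosSemidef) : 0 ≤ ((P * Q).trace).re := by
  obtain ⟨B, hB⟩ := CStarAlgebra.nonneg_iff_eq_star_mul_self.mp (Matrix.nonneg_iff_posSemidef.2 hQ)
  rw [Matrix.star_eq_conjTranspose] at hB
  subst hB
  rw [← Matrix.mul_assoc, Matrix.trace_mul_comm, ← Matrix.mul_assoc]
  exact (Complex.nonneg_iff.mp (hP.mul_mul_conjTranspose_same B).trace_nonneg).1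

lemma aux_psd {d : ℕ} {P : Matrix (Fin d) (Fin d) ℂ} (hP : P.IsHermitian)
    (h : ∀ Q : Matrix (Fin d) (Fin d) ℂ, Q.PosSemidef → 0 ≤ ((P * Q).trace).re) :
    P.PosSemidef := by
  refine .of_dotProduct_mulVec_nonneg hP fun x => ?_
  have h1 := h _ (Matrix.posSemidef_vecMulVec_self_star x)
  have h2 : (P * vecMulVec x (star x)).trace = star x ⬝ᵥ (P *ᵥ x) := by
    rw [Matrix.mul_vecMulVec, Matrix.trace_vecMulVec, dotProduct_comm]
  rw [h2] at h1
  rw [Complex.nonneg_iff]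
  refine ⟨h1, ?_⟩
  have := hP.im_star_dotProduct_mulVec_self x
  simpa using this.symm

/-- the cone of pairs of marginals -/
def auxK (n d : ℕ) : Set ((Fin n → Matrix (Fin d) (Fin d) ℂ) × (Fin n → Matrix (Fin d) (Fin d) ℂ)) :=
  {p | ∃ C : Fin n → Fin n → Matrix (Fin d) (Fin d) ℂ, (∀ i j, (C i j).PosSemidef) ∧
    (∀ i, ∑ j, C i j = p.1 i) ∧ (∀ j, ∑ i, C i j = p.2 j)}

open scoped Matrix.Norms.L2Operator MatrixOrder Topology in
lemma auxK_closed (n d : ℕ) : IsClosed (auxK n d) := by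
  apply IsSeqClosed.isClosed
  intro x p hx hp
  choose C hC h1 h2 using hx
  obtain ⟨r, hr⟩ := (Metric.isBounded_range_of_tendsto x hp).exists_norm_le
  have hb : ∀ k, C k ∈ Metric.closedBall (0 : Fin n → Fin n → Matrix (Fin d) (Fin d) ℂ) (max r 0) := by
    intro k
    rw [mem_closedBall_zero_iff]
    refine (pi_norm_le_iff_of_nonneg (le_max_right _ _)).2 fun i => ?_
    refine (pi_norm_le_iff_of_nonneg (le_max_right _ _)).2 fun j => ?_
    have h3 : C k i j ≤ (x k).1 i := by
      rw [← h1 k i]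
      exact Finset.single_le_sum (f := fun j => C k i j)
        (fun j _ => Matrix.nonneg_iff_posSemidef.2 (hC k i j)) (Finset.mem_univ j)
    calc ‖C k i j‖ ≤ ‖(x k).1 i‖ :=
          CStarAlgebra.norm_le_norm_of_nonneg_of_le (Matrix.nonneg_iff_posSemidef.2 (hC k i j)) h3
      _ ≤ ‖(x k).1‖ := norm_le_pi_norm _ i
      _ ≤ ‖x k‖ := norm_fst_le _
      _ ≤ r := hr _ ⟨k, rfl⟩
      _ ≤ _ := le_max_left _ _
  have : ProperSpace (Fin n → Fin n → Matrix (Fin d) (Fin d) ℂ) :=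
    FiniteDimensional.proper ℂ _
  obtain ⟨D, -, φ, hφ, hD⟩ := tendsto_subseq_of_bounded Metric.isBounded_closedBall hb
  have hDij : ∀ i j, Filter.Tendsto (fun k => C (φ k) i j) Filter.atTop (𝓝 (D i j)) := fun i j =>
    (tendsto_pi_nhds.1 ((tendsto_pi_nhds.1 hD) i)) j
  have hpφ := hp.comp hφ.tendsto_atTop
  refine ⟨D, fun i j => ?_, fun i => ?_, fun j => ?_⟩
  · rw [← Matrix.nonneg_iff_posSemidef]
    exact (CStarAlgebra.isClosed_nonneg (A := Matrix (Fin d) (Fin d) ℂ)).mem_of_tendsto (hDij i j)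
      (Filter.Eventually.of_forall fun k => Matrix.nonneg_iff_posSemidef.2 (hC _ i j))
  · have ha := tendsto_finsetSum Finset.univ (fun j _ => hDij i j)
    have hb := tendsto_pi_nhds.1 ((continuous_fst.tendsto p).comp hpφ) i
    refine tendsto_nhds_unique ha (hb.congr fun k => ?_)
    simp [h1]
  · have ha := tendsto_finsetSum Finset.univ (fun i _ => hDij i j)
    have hb := tendsto_pi_nhds.1 ((continuous_snd.tendsto p).comp hpφ) j
    refine tendsto_nhds_unique ha (hb.congr fun k => ?_)
    simp [h2]

lemma auxK_smul {n d : ℕ} {p} (hp : p ∈ auxK n d) {a : ℝ} (ha : 0 ≤ a) : a • p ∈ auxK n d := by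
  obtain ⟨C, hC, h1, h2⟩ := hp
  refine ⟨fun i j => a • C i j, fun i j => (hC i j).smul ha, fun i => ?_, fun j => ?_⟩
  · rw [← Finset.smul_sum, h1]; rfl
  · rw [← Finset.smul_sum, h2]; rfl

lemma auxK_add {n d : ℕ} {p q} (hp : p ∈ auxK n d) (hq : q ∈ auxK n d) : p + q ∈ auxK n d := by
  obtain ⟨C, hC, h1, h2⟩ := hp
  obtain ⟨C', hC', h1', h2'⟩ := hq
  refine ⟨fun i j => C i j + C' i j, fun i j => (hC i j).add (hC' i j), fun i => ?_, fun j => ?_⟩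
  · rw [Finset.sum_add_distrib, h1, h1']; rfl
  · rw [Finset.sum_add_distrib, h2, h2']; rfl

lemma auxK_single {n d : ℕ} (i j : Fin n) {Q : Matrix (Fin d) (Fin d) ℂ} (hQ : Q.PosSemidef) :
    (Pi.single i Q, Pi.single j Q) ∈ auxK n d := by
  refine ⟨fun a b => if a = i ∧ b = j then Q else 0, fun a b => ?_, fun a => ?_, fun b => ?_⟩
  · dsimp only
    split_ifs
    exacts [hQ, .zero]
  · by_cases h : a = i
    · subst h; simp
    · simp [h]
  · by_cases h : b = j
    · subst h; simp
    · simp [h]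

open scoped Matrix.Norms.L2Operator in
lemma aux_sep {n d : ℕ} (R S : Fin n → Matrix (Fin d) (Fin d) ℂ)
    (hR : ∀ i, (R i).IsHermitian) (hS : ∀ i, (S i).IsHermitian) (h : (R, S) ∉ auxK n d) :
    ∃ X Y : Fin n → Matrix (Fin d) (Fin d) ℂ, (∀ i, (X i).IsHermitian) ∧ (∀ j, (Y j).IsHermitian) ∧
      (∀ i j, (X i + Y j).PosSemidef) ∧
      ∑ i, ((X i * R i).trace).re + ∑ j, ((Y j * S j).trace).re < 0 := by
  have hconv : Convex ℝ (auxK n d) := by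
    intro p hp q hq a b ha hb _
    exact auxK_add (auxK_smul hp ha) (auxK_smul hq hb)
  obtain ⟨f, u, hfu, hf⟩ := geometric_hahn_banach_point_closed hconv (auxK_closed n d) h
  have h0 : (0 : (Fin n → Matrix (Fin d) (Fin d) ℂ) × (Fin n → Matrix (Fin d) (Fin d) ℂ)) ∈ auxK n d :=
    ⟨0, fun _ _ => .zero, fun i => by simp, fun j => by simp⟩
  have hu : u < 0 := by simpa using hf 0 h0
  have hpos : ∀ p ∈ auxK n d, 0 ≤ f p := by
    intro p hp
    by_contra! hneg
    have := hf _ (auxK_smul hp (a := u / f p) (div_nonneg_of_nonpos hu.le hneg.le))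
    rw [map_smul, smul_eq_mul, div_mul_cancel₀ _ hneg.ne] at this
    exact lt_irrefl _ this
  let F : (Fin n → Matrix (Fin d) (Fin d) ℂ) × (Fin n → Matrix (Fin d) (Fin d) ℂ) →ₗ[ℝ] ℝ := f
  choose X hXh hX using fun i : Fin n => aux_repr
    (F ∘ₗ LinearMap.inl ℝ _ _ ∘ₗ LinearMap.single ℝ (fun _ : Fin n => Matrix (Fin d) (Fin d) ℂ) i)
  choose Y hYh hY using fun j : Fin n => aux_repr
    (F ∘ₗ LinearMap.inr ℝ _ _ ∘ₗ LinearMap.single ℝ (fun _ : Fin n => Matrix (Fin d) (Fin d) ℂ) j)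
  refine ⟨X, Y, hXh, hYh, fun i j => ?_, ?_⟩
  · refine aux_psd ((hXh i).add (hYh j)) fun Q hQ => ?_
    rw [Matrix.add_mul, Matrix.trace_add, Complex.add_re, ← hX i Q hQ.1, ← hY j Q hQ.1]
    have := hpos _ (auxK_single i j hQ)
    simp only [LinearMap.comp_apply]
    rw [← map_add]
    simpa [F] using this
  · have e1 : ∑ i, ((X i * R i).trace).re = F (R, 0) := by
      rw [Finset.sum_congr rfl fun i _ => (hX i (R i) (hR i)).symm]
      simp only [LinearMap.comp_apply]
      rw [← map_sum, ← map_sum]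
      congr 1
      simp [Finset.univ_sum_single]
    have e2 : ∑ i, ((Y i * S i).trace).re = F (0, S) := by
      rw [Finset.sum_congr rfl fun i _ => (hY i (S i) (hS i)).symm]
      simp only [LinearMap.comp_apply]
      rw [← map_sum, ← map_sum]
      congr 1
      simp [Finset.univ_sum_single]
    rw [e1, e2, ← map_add]
    have : (R, (0 : Fin n → Matrix (Fin d) (Fin d) ℂ)) + (0, S) = (R, S) := by simp
    rw [this]
    exact hfu.trans hu

lemma aux_weak {n d : ℕ} (R S X Y : Fin n → Matrix (Fin d) (Fin d) ℂ) (h : (R, S) ∈ auxK n d)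
    (hXY : ∀ i j, (X i + Y j).PosSemidef) :
    0 ≤ ∑ i, ((X i * R i).trace).re + ∑ j, ((Y j * S j).trace).re := by
  obtain ⟨C, hC, h1, h2⟩ := h
  simp only at h1 h2
  have : ∑ i, ((X i * R i).trace).re + ∑ j, ((Y j * S j).trace).re
      = ∑ i, ∑ j, (((X i + Y j) * C i j).trace).re := by
    simp only [← h1, ← h2, Matrix.mul_sum, Matrix.trace_sum, Complex.re_sum, Matrix.add_mul,
      Matrix.trace_add, Complex.add_re, Finset.sum_add_distrib]
    congr 1
    exact Finset.sum_comm
  rw [this]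
  exact Finset.sum_nonneg fun i _ => Finset.sum_nonneg fun j _ => aux_trace_nonneg (hXY i j) (hC i j)

lemma aux_pair {d : ℕ} {A X : Matrix (Fin d) (Fin d) ℂ} (b c : ℝ) :
    ((X * ((b : ℂ) • A + (c : ℂ) • 1)).trace).re = b * ((X * A).trace).re + c * (X.trace).re := by
  simp [Matrix.mul_add]

lemma aux_trace_real {d : ℕ} {A : Matrix (Fin d) (Fin d) ℂ} (hA : A.PosSemidef) :
    A.trace = ((A.trace.re : ℝ) : ℂ) := by
  have := (Complex.nonneg_iff.mp hA.trace_nonneg).2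
  apply Complex.ext <;> simp [← this]

lemma aux_coef {N d : ℕ} {A : Matrix (Fin d) (Fin d) ℂ} (hA : A.PosSemidef) (b : ℝ) :
    (((1 - b : ℝ) : ℂ) / ((N : ℂ) - 1)) * (1 - A.trace / (d : ℂ))
      = (((1 - b) / ((N : ℝ) - 1) * (1 - A.trace.re / d) : ℝ) : ℂ) := by
  rw [aux_trace_real hA]
  push_cast
  simp

end helpers

/-- SDP duality for the incompatibility robustness with the physical noise
model arising from imperfect indirect measurements. -/
theorem stmt_17 {N d : ℕ} (hN : 2 ≤ N) (hd : 1 ≤ d)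
    (A B : Fin (N + 1) → Matrix (Fin d) (Fin d) ℂ)
    (hA : ∀ i, (A i).PosSemidef) (hAsum : ∑ i, A i = 1)
    (hB : ∀ j, (B j).PosSemidef) (hBsum : ∑ j, B j = 1) :
    sSup {β₀₀ : ℝ | 0 ≤ β₀₀ ∧ β₀₀ ≤ 1 ∧
        ∃ C : Fin (N + 1) → Fin (N + 1) → Matrix (Fin d) (Fin d) ℂ,
          (∀ i j, (C i j).PosSemidef) ∧
          (∀ i, ∑ j, C i j
            = (β₀₀ : ℂ) • A i
              + ((((1 - β₀₀ : ℝ) : ℂ) / ((N : ℂ) - 1)) * (1 - (A i).trace / (d : ℂ))) • 1) ∧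
          (∀ j, ∑ i, C i j
            = (β₀₀ : ℂ) • B j
              + ((((1 - β₀₀ : ℝ) : ℂ) / ((N : ℂ) - 1)) * (1 - (B j).trace / (d : ℂ))) • 1)}
      = sInf {r : ℝ |
          ∃ X Y : Fin (N + 1) → Matrix (Fin d) (Fin d) ℂ,
            (∀ i, (X i).IsHermitian) ∧ (∀ j, (Y j).IsHermitian) ∧
            (∀ i j, (X i + Y j).PosSemidef) ∧
            (1 + ∑ i, ((X i * A i).trace).re + ∑ j, ((Y j * B j).trace).re ≥
              (1 / ((N : ℝ) - 1)) *
                (∑ i, ((X i).trace).re + ∑ j, ((Y j).trace).re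
                  - (1 / (d : ℝ)) * ∑ j, ((B j).trace).re * ((Y j).trace).re
                  - (1 / (d : ℝ)) * ∑ i, ((X i).trace).re * ((A i).trace).re)) ∧
            r = 1 + ∑ i, ((X i * A i).trace).re + ∑ j, ((Y j * B j).trace).re} := by
  classical
  have hN1 : (0:ℝ) < (N:ℝ) - 1 := by
    have : (2:ℝ) ≤ N := by exact_mod_cast hN
    linarith
  have hd0 : (0:ℝ) < d := by exact_mod_cast hd
  simp only [aux_coef (hA _), aux_coef (hB _)]
  set R : ℝ → Fin (N+1) → Matrix (Fin d) (Fin d) ℂ := fun b i => (b : ℂ) • A i +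
    (((1 - b) / ((N : ℝ) - 1) * (1 - (A i).trace.re / d) : ℝ) : ℂ) • 1 with hRdef
  set S : ℝ → Fin (N+1) → Matrix (Fin d) (Fin d) ℂ := fun b i => (b : ℂ) • B i +
    (((1 - b) / ((N : ℝ) - 1) * (1 - (B i).trace.re / d) : ℝ) : ℂ) • 1 with hSdef
  have hherm : ∀ (b c : ℝ) (M : Matrix (Fin d) (Fin d) ℂ), M.IsHermitian →
      ((b : ℂ) • M + (c : ℂ) • (1 : Matrix (Fin d) (Fin d) ℂ)).IsHermitian := by
    intro b c M hM
    rw [Matrix.IsHermitian]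
    simp [Matrix.conjTranspose_add, Matrix.conjTranspose_smul, hM.eq]
  -- pairing
  have hpair : ∀ (b : ℝ) (X Y : Fin (N+1) → Matrix (Fin d) (Fin d) ℂ),
      ∑ i, ((X i * R b i).trace).re + ∑ j, ((Y j * S b j).trace).re
      = b * (∑ i, ((X i * A i).trace).re + ∑ j, ((Y j * B j).trace).re) + (1 - b) *
        ((1 / ((N : ℝ) - 1)) *
                (∑ i, ((X i).trace).re + ∑ j, ((Y j).trace).re
                  - (1 / (d : ℝ)) * ∑ j, ((B j).trace).re * ((Y j).trace).re
                  - (1 / (d : ℝ)) * ∑ i, ((X i).trace).re * ((A i).trace).re)) := by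
    intro b X Y
    simp only [hRdef, hSdef, aux_pair]
    have e1 : ∀ u x a : Fin (N+1) → ℝ,
        ∑ i, (b * u i + (1 - b) / ((N : ℝ) - 1) * (1 - a i / d) * x i)
        = b * ∑ i, u i + (1 - b) * (1 / ((N : ℝ) - 1) * (∑ i, x i - 1 / (d : ℝ) * ∑ i, x i * a i)) := by
      intro u x a
      simp only [Finset.mul_sum, ← Finset.sum_sub_distrib, ← Finset.sum_add_distrib]
      refine Finset.sum_congr rfl fun i _ => ?_
      ring
    rw [e1, e1]
    simp only [mul_comm ((B _).trace.re)]
    ring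
  -- zero feasible
  have hzero : (R 0, S 0) ∈ auxK (N+1) d := by
    have hle : ∀ (M : Fin (N+1) → Matrix (Fin d) (Fin d) ℂ), (∀ i, (M i).PosSemidef) →
        ∑ i, M i = 1 → (∀ i, 0 ≤ 1 - (M i).trace.re / d) ∧ ∑ i, (1 - (M i).trace.re / d) = N := by
      intro M hM hs
      have ht : ∑ i, (M i).trace.re = d := by
        rw [← Complex.re_sum, ← Matrix.trace_sum, hs]; simp
      constructor
      · intro i
        have : (M i).trace.re ≤ d := by
          rw [← ht]
          exact Finset.single_le_sum (f := fun i => (M i).trace.re)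
            (fun j _ => (Complex.nonneg_iff.mp (hM j).trace_nonneg).1) (Finset.mem_univ i)
        rw [sub_nonneg, div_le_one hd0]; exact this
      · rw [Finset.sum_sub_distrib, ← Finset.sum_div, ht, div_self hd0.ne']
        simp
    obtain ⟨ha, hsa⟩ := hle A hA hAsum
    obtain ⟨hb, hsb⟩ := hle B hB hBsum
    have hN0 : (0:ℝ) < N := by linarith
    refine ⟨fun i j => ((1 - (A i).trace.re / d) * (1 - (B j).trace.re / d) / ((N - 1) * N) : ℝ) • 1,
      fun i j => Matrix.PosSemidef.one.smul ?_, fun i => ?_, fun j => ?_⟩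
    · exact div_nonneg (mul_nonneg (ha i) (hb j)) (by positivity)
    · rw [← Finset.sum_smul, ← Finset.sum_div, ← Finset.mul_sum, hsb]
      simp only [hRdef]
      rw [Complex.ofReal_zero, zero_smul, zero_add, Complex.coe_smul]
      congr 1
      field_simp
      ring
    · rw [← Finset.sum_smul, ← Finset.sum_div, ← Finset.sum_mul, hsa]
      simp only [hSdef]
      rw [Complex.ofReal_zero, zero_smul, zero_add, Complex.coe_smul]
      congr 1
      field_simp
      ring
  have hmem : ∀ b : ℝ, (∃ C : Fin (N + 1) → Fin (N + 1) → Matrix (Fin d) (Fin d) ℂ,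
          (∀ i j, (C i j).PosSemidef) ∧ (∀ i, ∑ j, C i j = R b i) ∧ (∀ j, ∑ i, C i j = S b j))
        ↔ (R b, S b) ∈ auxK (N+1) d := fun b => Iff.rfl
  change sSup {b : ℝ | 0 ≤ b ∧ b ≤ 1 ∧ (R b, S b) ∈ auxK (N+1) d} = _
  set P := {b : ℝ | 0 ≤ b ∧ b ≤ 1 ∧ (R b, S b) ∈ auxK (N+1) d} with hP
  have hPne : P.Nonempty := ⟨0, le_rfl, zero_le_one, hzero⟩
  have hPbdd : BddAbove P := ⟨1, fun b hb => hb.2.1⟩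
  have hone : (1:ℝ) ∈ {r : ℝ |
          ∃ X Y : Fin (N + 1) → Matrix (Fin d) (Fin d) ℂ,
            (∀ i, (X i).IsHermitian) ∧ (∀ j, (Y j).IsHermitian) ∧
            (∀ i j, (X i + Y j).PosSemidef) ∧
            (1 + ∑ i, ((X i * A i).trace).re + ∑ j, ((Y j * B j).trace).re ≥
              (1 / ((N : ℝ) - 1)) *
                (∑ i, ((X i).trace).re + ∑ j, ((Y j).trace).re
                  - (1 / (d : ℝ)) * ∑ j, ((B j).trace).re * ((Y j).trace).re
                  - (1 / (d : ℝ)) * ∑ i, ((X i).trace).re * ((A i).trace).re)) ∧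
            r = 1 + ∑ i, ((X i * A i).trace).re + ∑ j, ((Y j * B j).trace).re} := by
    refine ⟨0, 0, fun _ => Matrix.isHermitian_zero, fun _ => Matrix.isHermitian_zero, fun _ _ => ?_, ?_, ?_⟩
    · simpa using Matrix.PosSemidef.zero
    · simp
    · simp
  have hweak : ∀ r ∈ {r : ℝ |
          ∃ X Y : Fin (N + 1) → Matrix (Fin d) (Fin d) ℂ,
            (∀ i, (X i).IsHermitian) ∧ (∀ j, (Y j).IsHermitian) ∧
            (∀ i j, (X i + Y j).PosSemidef) ∧
            (1 + ∑ i, ((X i * A i).trace).re + ∑ j, ((Y j * B j).trace).re ≥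
              (1 / ((N : ℝ) - 1)) *
                (∑ i, ((X i).trace).re + ∑ j, ((Y j).trace).re
                  - (1 / (d : ℝ)) * ∑ j, ((B j).trace).re * ((Y j).trace).re
                  - (1 / (d : ℝ)) * ∑ i, ((X i).trace).re * ((A i).trace).re)) ∧
            r = 1 + ∑ i, ((X i * A i).trace).re + ∑ j, ((Y j * B j).trace).re},
      ∀ b ∈ P, b ≤ r := by
    rintro r ⟨X, Y, hX, hY, hXY, hc, rfl⟩ b ⟨hb0, hb1, hb⟩
    have := aux_weak _ _ X Y hb hXY
    rw [hpair] at this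
    have h3 := mul_le_mul_of_nonneg_left hc (sub_nonneg.2 hb1)
    linarith
  refine le_antisymm ?_ ?_
  · exact csSup_le hPne fun b hb => le_csInf ⟨1, hone⟩ fun r hr => hweak r hr b hb
  · refine le_of_forall_gt_imp_ge_of_dense fun b hb => ?_
    have hbdd : BddBelow {r : ℝ |
          ∃ X Y : Fin (N + 1) → Matrix (Fin d) (Fin d) ℂ,
            (∀ i, (X i).IsHermitian) ∧ (∀ j, (Y j).IsHermitian) ∧
            (∀ i j, (X i + Y j).PosSemidef) ∧
            (1 + ∑ i, ((X i * A i).trace).re + ∑ j, ((Y j * B j).trace).re ≥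
              (1 / ((N : ℝ) - 1)) *
                (∑ i, ((X i).trace).re + ∑ j, ((Y j).trace).re
                  - (1 / (d : ℝ)) * ∑ j, ((B j).trace).re * ((Y j).trace).re
                  - (1 / (d : ℝ)) * ∑ i, ((X i).trace).re * ((A i).trace).re)) ∧
            r = 1 + ∑ i, ((X i * A i).trace).re + ∑ j, ((Y j * B j).trace).re} :=
      ⟨0, fun r hr => hweak r hr 0 ⟨le_rfl, zero_le_one, hzero⟩⟩
    rcases lt_or_ge 1 b with h1b | hb1
    · exact (csInf_le hbdd hone).trans h1b.le
    have hb0 : 0 ≤ b := (le_csSup hPbdd ⟨le_rfl, zero_le_one, hzero⟩).trans hb.le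
    have hnot : (R b, S b) ∉ auxK (N+1) d := fun h =>
      absurd (le_csSup hPbdd ⟨hb0, hb1, h⟩) (not_le.2 hb)
    obtain ⟨X, Y, hX, hY, hXY, hlt⟩ := aux_sep (R b) (S b)
      (fun i => hherm _ _ _ (hA i).1) (fun i => hherm _ _ _ (hB i).1) hnot
    have hz := aux_weak _ _ X Y hzero hXY
    rw [hpair] at hlt hz
    set a := ∑ i, ((X i * A i).trace).re + ∑ j, ((Y j * B j).trace).re with ha
    set t := ((1 / ((N : ℝ) - 1)) *
                (∑ i, ((X i).trace).re + ∑ j, ((Y j).trace).re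
                  - (1 / (d : ℝ)) * ∑ j, ((B j).trace).re * ((Y j).trace).re
                  - (1 / (d : ℝ)) * ∑ i, ((X i).trace).re * ((A i).trace).re)) with ht
    have ht0 : 0 ≤ t := by linarith
    have hta : 0 < t - a := by
      by_contra! hcon
      nlinarith
    set l : ℝ := 1 / (t - a) with hl
    have hl0 : 0 ≤ l := by positivity
    have hla : 1 + l * a = l * t := by rw [hl]; field_simp; ring
    have ea : 1 + ∑ i, (((l • X i) * A i).trace).re + ∑ j, (((l • Y j) * B j).trace).re = 1 + l * a := by
      simp only [Matrix.smul_mul, Matrix.trace_smul, Complex.smul_re, smul_eq_mul, ← Finset.mul_sum]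
      rw [ha]; ring
    refine (csInf_le hbdd (a := 1 + l * a) ⟨fun i => l • X i, fun j => l • Y j, fun i => ?_,
      fun j => ?_, fun i j => ?_, ?_, ea.symm⟩).trans ?_
    · rw [Matrix.IsHermitian, Matrix.conjTranspose_smul, (hX i).eq]; simp
    · rw [Matrix.IsHermitian, Matrix.conjTranspose_smul, (hY j).eq]; simp
    · rw [← smul_add]; exact (hXY i j).smul hl0
    · rw [ea, hla, ht]
      simp only [Matrix.trace_smul, Complex.smul_re, smul_eq_mul, ← Finset.mul_sum, mul_assoc,
        mul_left_comm _ l]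
      apply le_of_eq
      ring
    · rw [hla, hl, one_div, inv_mul_le_iff₀ hta]
      linarith
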